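/- Suppose Θ = {θ_1, θ_2}, each edge cost function ℓ̃_e^θ : ℝ² → ℝ is continuously differentiable, and for all paths p_1, p_2 ∈ P and every flow f ∈ ℝ^{|P|·2}, Σ_{e ∈ p_1 ∩ p_2} [ ∂_1 ℓ̃_e^{θ_2}(φ_e^{θ_1}(f), φ_e^{θ_2}(f)) − ∂_2 ℓ̃_e^{θ_1}(φ_e^{θ_1}(f), φ_e^{θ_2}(f)) ] = 0. Then for every path p ∈ P and every flow f, Σ_{e∈p} ∫_0^{φ_e^{θ_2}(f)} [ ∂_1 ℓ̃_e^{θ_2}(φ_e^{θ_1}(f), u) − ∂_2 ℓ̃_e^{θ_1}(φ_e^{θ_1}(f), u) ] du = 0. -/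

import Mathlib

/-!
Fix `g`, and let `c e u = ∂₁ℓ₂(φ_e(g), u) - ∂₂ℓ₁(φ_e(g), u)`, which is continuous in `u`. The
substitution `u = t φ_e(h)` turns the claim into the vanishing of
`∫ t in 0..1, ∑ e ∈ p, φ_e(h) * c e (t φ_e(h))`. Already the integrand vanishes: expanding the
factor `φ_e(h) = ∑ q ∋ e, h q` and exchanging sums gives
`∑ q, h q * ∑ e ∈ p ∩ q, c e (φ_e(t • h))`, and each inner sum is zero by the symmetry condition
for the flow `(g, t • h)`.
-/

open MeasureTheory

noncomputable section

namespace RoutingGame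

open scoped Classical

variable {E P : Type*}

/-- Edge flow of one type on edge `e` induced by the path flows `g` of that type:
`φ_e = ∑_{p ∈ P : e ∈ p} g_p`. -/
def edgeFlow [Fintype P] (edges : P → Finset E) (g : P → ℝ) (e : E) : ℝ :=
  ∑ p ∈ Finset.univ.filter (fun p => e ∈ edges p), g p

/-- Utility of player 1 (type `θ₁`) in the abstract game:
`U₁(g,h) = ∑_e ∫_0^{φ_e^{θ₁}} ℓ̃_e^{θ₁}(u, φ_e^{θ₂}) du`. -/
def U1 [Fintype E] [Fintype P] (edges : P → Finset E) (ℓ1 : E → ℝ → ℝ → ℝ)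
    (g h : P → ℝ) : ℝ :=
  ∑ e : E, ∫ u in (0:ℝ)..(edgeFlow edges g e), ℓ1 e u (edgeFlow edges h e)

/-- Utility of player 2 (type `θ₂`) in the abstract game:
`U₂(g,h) = ∑_e ∫_0^{φ_e^{θ₂}} ℓ̃_e^{θ₂}(φ_e^{θ₁}, u) du`. -/
def U2 [Fintype E] [Fintype P] (edges : P → Finset E) (ℓ2 : E → ℝ → ℝ → ℝ)
    (g h : P → ℝ) : ℝ :=
  ∑ e : E, ∫ u in (0:ℝ)..(edgeFlow edges h e), ℓ2 e (edgeFlow edges g e) u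

/-- `V` is a potential function for the two-player abstract game associated with
edge cost functions `ℓ1, ℓ2` (arguments of `V`: path flows of type `θ₁`, of type `θ₂`). -/
def IsPotential [Fintype E] [Fintype P] (edges : P → Finset E)
    (ℓ1 ℓ2 : E → ℝ → ℝ → ℝ) (V : (P → ℝ) → (P → ℝ) → ℝ) : Prop :=
  (∀ g g' h : P → ℝ, V g h - V g' h = U1 edges ℓ1 g h - U1 edges ℓ1 g' h) ∧
  (∀ g h h' : P → ℝ, V g h - V g h' = U2 edges ℓ2 g h - U2 edges ℓ2 g h')

/-- The candidate potential function
`V(f) = ∑_e [∫_0^{φ₁} ℓ₁(u,φ₂) du + ∫_0^{φ₂} ℓ₂(φ₁,u) du − ∫_0^{φ₂}∫_0^{φ₁} ∂₂ℓ₁(u₁,u₂) du₁ du₂]`. -/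
def Vpot [Fintype E] [Fintype P] (edges : P → Finset E)
    (ℓ1 ℓ2 : E → ℝ → ℝ → ℝ) (g h : P → ℝ) : ℝ :=
  ∑ e : E,
    ((∫ u in (0:ℝ)..(edgeFlow edges g e), ℓ1 e u (edgeFlow edges h e)) +
     (∫ u in (0:ℝ)..(edgeFlow edges h e), ℓ2 e (edgeFlow edges g e) u) -
     ∫ u2 in (0:ℝ)..(edgeFlow edges h e),
       ∫ u1 in (0:ℝ)..(edgeFlow edges g e), deriv (fun t => ℓ1 e u1 t) u2)

lemma edgeFlow_mul_left [Fintype P] (edges : P → Finset E) (t : ℝ) (h : P → ℝ) (e : E) :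
    edgeFlow edges (fun q => t * h q) e = edgeFlow edges h e * t := by
  simp only [edgeFlow, ← Finset.mul_sum, mul_comm]

/-- Exchange of summation between the edges of a path and the paths using an edge. -/
lemma sum_edgeFlow_mul [Fintype P] (edges : P → Finset E) (p : P) (h : P → ℝ) (a : E → ℝ) :
    ∑ e ∈ edges p, edgeFlow edges h e * a e
      = ∑ q, h q * ∑ e ∈ edges p ∩ edges q, a e := by
  simp only [edgeFlow, Finset.sum_mul, Finset.mul_sum, Finset.sum_filter,
    ← Finset.filter_mem_eq_inter, ite_mul, mul_ite, zero_mul, mul_zero]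
  exact Finset.sum_comm

lemma continuous_deriv_fst {F : ℝ → ℝ → ℝ} (hF : ContDiff ℝ 1 (fun q : ℝ × ℝ => F q.1 q.2))
    (a : ℝ) : Continuous fun u => deriv (fun t => F t u) a := by
  have key : ∀ u, deriv (fun t => F t u) a
      = fderiv ℝ (fun q : ℝ × ℝ => F q.1 q.2) (a, u) (1, 0) := fun u =>
    (HasFDerivAt.comp_hasDerivAt (f := fun t : ℝ => (t, u)) a
      (hF.differentiable one_ne_zero (a, u)).hasFDerivAt
      ((hasDerivAt_id a).prodMk (hasDerivAt_const a u))).deriv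
  simp only [key]
  exact ((hF.continuous_fderiv one_ne_zero).comp (by fun_prop : Continuous fun u : ℝ => (a, u)))
    |>.clm_apply continuous_const

lemma continuous_deriv_snd {F : ℝ → ℝ → ℝ} (hF : ContDiff ℝ 1 (fun q : ℝ × ℝ => F q.1 q.2))
    (a : ℝ) : Continuous fun u => deriv (fun t => F a t) u :=
  (hF.comp (contDiff_const.prodMk contDiff_id : ContDiff ℝ 1 fun u : ℝ => (a, u))).continuous_deriv
    le_rfl

/-- **Vanishing of `Ψ`** (key step in the proof of Lemma 4): with two types and
continuously differentiable edge cost functions, if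
`∑_{e∈p₁∩p₂} [∂₁ℓ̃_e^{θ₂}(φ₁,φ₂) − ∂₂ℓ̃_e^{θ₁}(φ₁,φ₂)] = 0` for all paths and all flows,
then for every path `p` and every flow,
`∑_{e∈p} ∫_0^{φ₂} [∂₁ℓ̃_e^{θ₂}(φ₁,u) − ∂₂ℓ̃_e^{θ₁}(φ₁,u)] du = 0`. -/
theorem psi_eq_zero {E P : Type*} [Fintype E] [Fintype P]
    (edges : P → Finset E) (ℓ1 ℓ2 : E → ℝ → ℝ → ℝ)
    (hℓ1 : ∀ e, ContDiff ℝ 1 (fun q : ℝ × ℝ => ℓ1 e q.1 q.2))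
    (hℓ2 : ∀ e, ContDiff ℝ 1 (fun q : ℝ × ℝ => ℓ2 e q.1 q.2))
    (hsym : ∀ (p1 p2 : P) (g h : P → ℝ),
      ∑ e ∈ edges p1 ∩ edges p2,
        (deriv (fun t => ℓ2 e t (edgeFlow edges h e)) (edgeFlow edges g e) -
         deriv (fun t => ℓ1 e (edgeFlow edges g e) t) (edgeFlow edges h e)) = 0) :
    ∀ (p : P) (g h : P → ℝ),
      ∑ e ∈ edges p,
        ∫ u in (0:ℝ)..(edgeFlow edges h e),
          (deriv (fun t => ℓ2 e t u) (edgeFlow edges g e) -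
           deriv (fun t => ℓ1 e (edgeFlow edges g e) t) u) = 0 := by
  intro p g h
  have hc : ∀ e, Continuous fun u => deriv (fun t => ℓ2 e t u) (edgeFlow edges g e) -
      deriv (fun t => ℓ1 e (edgeFlow edges g e) t) u := fun e =>
    (continuous_deriv_fst (hℓ2 e) _).sub (continuous_deriv_snd (hℓ1 e) _)
  set c : E → ℝ → ℝ := fun e u => deriv (fun t => ℓ2 e t u) (edgeFlow edges g e) -
      deriv (fun t => ℓ1 e (edgeFlow edges g e) t) u with hcdef
  have hsub : ∀ e, ∫ u in (0:ℝ)..(edgeFlow edges h e), c e u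
      = ∫ t in (0:ℝ)..1, edgeFlow edges h e * c e (edgeFlow edges h e * t) := fun e => by
    rw [intervalIntegral.integral_const_mul, intervalIntegral.mul_integral_comp_mul_left]
    simp
  have hzero : ∀ t : ℝ,
      ∑ e ∈ edges p, edgeFlow edges h e * c e (edgeFlow edges h e * t) = 0 := fun t => by
    rw [sum_edgeFlow_mul]
    refine Finset.sum_eq_zero fun q _ => ?_
    have := hsym p q g (fun q => t * h q)
    simp only [edgeFlow_mul_left] at this
    rw [this, mul_zero]
  calc ∑ e ∈ edges p, ∫ u in (0:ℝ)..(edgeFlow edges h e), c e u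
      = ∑ e ∈ edges p,
          ∫ t in (0:ℝ)..1, edgeFlow edges h e * c e (edgeFlow edges h e * t) :=
        Finset.sum_congr rfl fun e _ => hsub e
    _ = ∫ t in (0:ℝ)..1,
          ∑ e ∈ edges p, edgeFlow edges h e * c e (edgeFlow edges h e * t) :=
        (intervalIntegral.integral_finsetSum fun e _ =>
          (continuous_const.mul ((hc e).comp
            (continuous_const.mul continuous_id))).intervalIntegrable _ _).symm
    _ = 0 := by simp only [hzero, intervalIntegral.integral_zero]

end RoutingGame
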